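/- arXiv:1809.05004 — 6 statements merged into one kernel-verified Lean document; each statement's English description precedes it below -/
import Mathlib

section
/- Let θ be a regular cardinal, let R = (X, Y, ⊏) be a relational system, and let F ⊆ X be a strongly θ-R-unbounded family with |F| = θ. Then F is a strongly θ-R^⊥-dominating family, where R^⊥ := (Y, X, ⊏^⊥) is the dual relational system with y ⊏^⊥ x iff ¬(x ⊏ y). -/
universe u

/-- Let `θ` be a regular cardinal, `R = (X, Y, ⊏)` a relational system,
and `F ⊆ X` a strongly `θ`-`R`-unbounded family with `|F| = θ`. Then `F` is a strongly
`θ`-`R^⊥`-dominating family, where `R^⊥ = (Y, X, ⊏^⊥)` with `y ⊏^⊥ x` iff `¬(x ⊏ y)`: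
there are a `<θ`-directed partial order `(L, ⊴)` and an indexed family `(a_l)_{l ∈ L}`
with `F = {a_l : l ∈ L}` such that for every `y ∈ Y` there is `l₀ ∈ L` with
`¬ (a_l ⊏ y)` for every `l ⊵ l₀`. -/
theorem stmt_2 {X Y : Type u} (R : X → Y → Prop) (θ : Cardinal.{u})
    (hreg : θ.IsRegular) (F : Set X)
    (hFcard : Cardinal.mk F = θ)
    (hstrong : ∀ y : Y, Cardinal.mk {x : X // x ∈ F ∧ R x y} < θ) :
    ∃ (L : Type u) (le : L → L → Prop), IsPartialOrder L le ∧
      (∀ S : Set L, Cardinal.mk S < θ → ∃ u0 : L, ∀ l ∈ S, le l u0) ∧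
      ∃ a : L → X, F = Set.range a ∧
        ∀ y : Y, ∃ l0 : L, ∀ l : L, le l0 l → ¬ R (a l) y := by
  have hcof : Order.cof θ.ord.ToType = θ := by
    rw [Ordinal.cof_toType, hreg.cof_ord]
  have key : ∀ S : Set θ.ord.ToType, Cardinal.mk S < θ → ∃ u0, ∀ l ∈ S, l < u0 := by
    intro S hS
    by_contra! h
    have h1 : IsCofinal S := fun a => h a
    have h2 := Order.cof_le h1
    rw [hcof] at h2
    exact absurd hS (not_lt.2 h2)
  obtain ⟨e⟩ : Nonempty (θ.ord.ToType ≃ F) := by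
    rw [← Cardinal.eq, Cardinal.mk_ord_toType, hFcard]
  refine ⟨θ.ord.ToType, (· ≤ ·), inferInstance, ?_, fun l => (e l : X), ?_, ?_⟩
  · intro S hS
    obtain ⟨u0, h⟩ := key S hS
    exact ⟨u0, fun l hl => (h l hl).le⟩
  · ext x
    constructor
    · intro hx
      exact ⟨e.symm ⟨x, hx⟩, by simp⟩
    · rintro ⟨l, rfl⟩
      exact (e l).2
  · intro y
    have hS : Cardinal.mk {l : θ.ord.ToType | R (e l) y} < θ := by
      refine lt_of_le_of_lt ?_ (hstrong y)
      refine Cardinal.mk_le_of_injective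
        (f := fun l => (⟨(e l.1 : X), (e l.1).2, l.2⟩ : {x : X // x ∈ F ∧ R x y})) ?_
      intro a b hab
      have h3 : (e a.1 : X) = (e b.1 : X) := congrArg (fun z : {x : X // x ∈ F ∧ R x y} => z.1) hab
      exact Subtype.ext (e.injective (Subtype.ext h3))
    obtain ⟨u0, h⟩ := key _ hS
    exact ⟨u0, fun l hl hR => absurd (h l hR) (not_lt.2 hl)⟩
end

section
/- Let P be a preorder and let Q ⊆ P be an Fr-linked subset. Then Q contains no infinite antichain of P, i.e., every set of pairwise incompatible conditions contained in Q is finite. -/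
universe u

/-- Two conditions of a preorder are compatible if they have a common extension. -/
def Compat {P : Type u} [Preorder P] (p q : P) : Prop := ∃ r : P, r ≤ p ∧ r ≤ q

/-- `Q ⊆ P` is Frechet-linked: for every sequence `(p_n)` in `Q` there is `q ∈ P` such
that for every `r ≤ q` the set `{n : r compatible with p_n}` is infinite. -/
def FrLinked {P : Type u} [Preorder P] (Q : Set P) : Prop :=
  ∀ p : ℕ → P, (∀ n, p n ∈ Q) →
    ∃ q : P, ∀ r : P, r ≤ q → {n : ℕ | Compat r (p n)}.Infinite

/-- Let `P` be a preorder and `Q ⊆ P` an Fr-linked subset. Then `Q`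
contains no infinite antichain of `P`: every set of pairwise incompatible conditions
contained in `Q` is finite. -/
theorem stmt_6 {P : Type u} [Preorder P] (Q : Set P) (hQ : FrLinked Q) :
    ∀ A : Set P, A ⊆ Q → (∀ p ∈ A, ∀ q ∈ A, p ≠ q → ¬ Compat p q) → A.Finite := by
  intro A hAQ hA
  by_contra hinf
  have hinf : A.Infinite := hinf
  let f := hinf.natEmbedding A
  obtain ⟨q, hq⟩ := hQ (fun n => (f n : P)) (fun n => hAQ (f n).2)
  obtain ⟨n, r, hrq, hrn⟩ := (hq q le_rfl).nonempty
  obtain ⟨m, ⟨s, hsr, hsm⟩, hmn⟩ := (hq r hrq).exists_notMem_finite (Set.finite_singleton n)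
  refine hA (f n) (f n).2 (f m) (f m).2 ?_ ⟨s, hsr.trans hrn, hsm⟩
  intro h
  exact hmn (f.injective (Subtype.ext h)).symm
end

section
/- Let (Ω, Σ, μ) be a probability space, let δ > 0, and let (A_n)_{n∈ℕ} be a sequence of measurable sets with μ(A_n) ≥ δ for all n. Then Q := limsup_n A_n = ⋂_m ⋃_{n≥m} A_n satisfies μ(Q) ≥ δ, and for every measurable R ⊆ Q with μ(R) > 0 the set {n ∈ ℕ : μ(R ∩ A_n) > 0} is infinite. (This witnesses that in random forcing the set of conditions of measure ≥ δ is Frechet-linked, so random forcing is σ-Fr-linked, hence σ-uf-linked.) -/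
open MeasureTheory
open scoped ENNReal

/-- Let `(Ω, Σ, μ)` be a probability space, `δ > 0`, and `(A_n)` a
sequence of measurable sets with `μ(A_n) ≥ δ` for all `n`. Then
`Q := limsup_n A_n = ⋂_m ⋃_{n ≥ m} A_n` satisfies `μ(Q) ≥ δ`, and for every measurable
`R ⊆ Q` with `μ(R) > 0` the set `{n : μ(R ∩ A_n) > 0}` is infinite. -/
theorem stmt_7 {Ω : Type*} [MeasurableSpace Ω] (μ : Measure Ω) [IsProbabilityMeasure μ]
    (δ : ℝ≥0∞) (hδ : 0 < δ) (A : ℕ → Set Ω) (hmeas : ∀ n, MeasurableSet (A n))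
    (hA : ∀ n, δ ≤ μ (A n)) :
    δ ≤ μ (⋂ m, ⋃ n, ⋃ (_ : m ≤ n), A n) ∧
    ∀ R : Set Ω, MeasurableSet R → R ⊆ (⋂ m, ⋃ n, ⋃ (_ : m ≤ n), A n) → 0 < μ R →
      {n : ℕ | 0 < μ (R ∩ A n)}.Infinite := by
  constructor
  · have hanti : Antitone (fun m : ℕ => ⋃ n, ⋃ (_ : m ≤ n), A n) := by
      intro a b hab x hx
      simp only [Set.mem_iUnion] at hx ⊢
      obtain ⟨n, hn, hx⟩ := hx
      exact ⟨n, hab.trans hn, hx⟩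
    rw [hanti.measure_iInter
      (fun m => (MeasurableSet.iUnion fun n => MeasurableSet.iUnion fun _ =>
        hmeas n).nullMeasurableSet) ⟨0, measure_ne_top _ _⟩]
    refine le_iInf fun m => (hA m).trans (measure_mono ?_)
    intro x hx
    simp only [Set.mem_iUnion]
    exact ⟨m, le_rfl, hx⟩
  · intro R _ hRQ hR
    rw [← Nat.frequently_atTop_iff_infinite, Filter.frequently_atTop]
    intro m
    by_contra hcon
    push Not at hcon
    have h0 : μ (⋃ n, ⋃ (_ : m ≤ n), R ∩ A n) = 0 := by
      refine measure_iUnion_null fun n => measure_iUnion_null fun hn => ?_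
      exact nonpos_iff_eq_zero.mp (hcon n hn)
    refine hR.ne' (measure_mono_null ?_ h0)
    intro x hx
    have hq := Set.mem_iInter.mp (hRQ hx) m
    simp only [Set.mem_iUnion] at hq ⊢
    obtain ⟨n, hn, hxn⟩ := hq
    exact ⟨n, hn, hx, hxn⟩
end

section
/- Let k ≥ 1 be a natural number and let (I_n)_{n∈ℕ} be a sequence of nonempty finite pairwise disjoint subsets of {i ∈ ℕ : i ≥ k} whose union is {i ∈ ℕ : i ≥ k}, and assume ∑_{n∈ℕ} 2^{-|I_n|} < 1. For each n set A_n := {x ∈ 2^ω : if x(i) = 0 for all i < k, then x(i) = 0 for all i ∈ I_n}. Then λ(A_n) = 1 − 2^{−k} + 2^{−k−|I_n|} for every n, and λ(⋃_n A_n) ≤ 1 − 2^{−k} + 2^{−k}·∑_n 2^{-|I_n|} < 1; in particular there is a set of positive measure disjoint from every A_n. (This witnesses that the ultrafilter-limit property of Lemma ‘EDuflim’ fails for random forcing: some condition forces that no p_n lies in the generic filter, even though the D-limit of the corresponding conditions is the trivial condition.) -/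
open scoped ENNReal

/-- The sets witnessing failure of ultrafilter limits for random forcing:
`A_n := {x ∈ 2^ω : if x(i) = 0 for all i < k, then x(i) = 0 for all i ∈ I_n}`. -/
def badSet (k : ℕ) (I : ℕ → Finset ℕ) (n : ℕ) : Set (ℕ → Bool) :=
  {x | (∀ i < k, x i = false) → ∀ i ∈ I n, x i = false}

/-- Let `k ≥ 1` and let `(I_n)` be a sequence of nonempty finite
pairwise disjoint subsets of `{i : i ≥ k}` whose union is `{i : i ≥ k}`, with
`∑_n 2^{-|I_n|} < 1`. Let `λ` be the uniform coin-flipping measure on Cantor space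
(characterized by its values on cylinders). Then `λ(A_n) = 1 - 2^{-k} + 2^{-k-|I_n|}`
for every `n`, `λ(⋃_n A_n) ≤ 1 - 2^{-k} + 2^{-k}·∑_n 2^{-|I_n|} < 1`, and in particular
there is a measurable set of positive measure disjoint from every `A_n`. -/
theorem stmt_11 (μ : MeasureTheory.Measure (ℕ → Bool))
    (hcyl : ∀ (u : Finset ℕ) (f : ℕ → Bool),
      μ {x : ℕ → Bool | ∀ i ∈ u, x i = f i} = (2 : ℝ≥0∞)⁻¹ ^ u.card)
    (k : ℕ) (hk : 1 ≤ k) (I : ℕ → Finset ℕ)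
    (hne : ∀ n, (I n).Nonempty)
    (hsub : ∀ n, ∀ i ∈ I n, k ≤ i)
    (hdisj : ∀ m n, m ≠ n → Disjoint (I m) (I n))
    (hunion : (⋃ n : ℕ, ((I n : Finset ℕ) : Set ℕ)) = {i : ℕ | k ≤ i})
    (hsum : ∑' n : ℕ, (2 : ℝ≥0∞)⁻¹ ^ (I n).card < 1) :
    (∀ n : ℕ, μ (badSet k I n) = 1 - (2 : ℝ≥0∞)⁻¹ ^ k + (2 : ℝ≥0∞)⁻¹ ^ (k + (I n).card)) ∧
    μ (⋃ n : ℕ, badSet k I n) ≤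
      1 - (2 : ℝ≥0∞)⁻¹ ^ k + (2 : ℝ≥0∞)⁻¹ ^ k * ∑' n : ℕ, (2 : ℝ≥0∞)⁻¹ ^ (I n).card ∧
    μ (⋃ n : ℕ, badSet k I n) < 1 ∧
    ∃ R : Set (ℕ → Bool), MeasurableSet R ∧ 0 < μ R ∧ ∀ n : ℕ, Disjoint R (badSet k I n) := by
  have hm : ∀ u : Finset ℕ, MeasurableSet {x : ℕ → Bool | ∀ i ∈ u, x i = false} := by
    intro u
    have : {x : ℕ → Bool | ∀ i ∈ u, x i = false}
        = ⋂ i ∈ u, (fun x : ℕ → Bool => x i) ⁻¹' {false} := by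
      ext x; simp
    rw [this]
    exact Finset.measurableSet_biInter u
      (fun i _ => measurable_pi_apply i (MeasurableSet.singleton false))
  have hc : ∀ u : Finset ℕ, μ {x : ℕ → Bool | ∀ i ∈ u, x i = false}
      = (2 : ℝ≥0∞)⁻¹ ^ u.card := fun u => hcyl u (fun _ => false)
  have huniv : μ Set.univ = 1 := by
    have h := hc ∅
    simpa using h
  haveI : MeasureTheory.IsProbabilityMeasure μ := ⟨huniv⟩
  have hPc : μ {x : ℕ → Bool | ∀ i ∈ Finset.range k, x i = false}ᶜ
      = 1 - (2 : ℝ≥0∞)⁻¹ ^ k := by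
    rw [MeasureTheory.prob_compl_eq_one_sub (hm _), hc, Finset.card_range]
  have hcard : ∀ n, (Finset.range k ∪ I n).card = k + (I n).card := by
    intro n
    rw [Finset.card_union_of_disjoint, Finset.card_range]
    rw [Finset.disjoint_left]
    intro i hi hi2
    have h1 := hsub n i hi2
    have h2 := Finset.mem_range.1 hi
    omega
  have hbad : ∀ n, badSet k I n = {x : ℕ → Bool | ∀ i ∈ Finset.range k, x i = false}ᶜ ∪
      {x : ℕ → Bool | ∀ i ∈ Finset.range k ∪ I n, x i = false} := by
    intro n
    ext x
    simp only [badSet, Set.mem_setOf_eq, Set.mem_union, Set.mem_compl_iff, Finset.mem_range,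
      Finset.mem_union]
    constructor
    · intro h
      by_cases hx : ∀ i < k, x i = false
      · right
        rintro i (hi | hi)
        · exact hx i hi
        · exact h hx i hi
      · exact Or.inl hx
    · rintro (h | h) hx i hi
      · exact absurd hx h
      · exact h i (Or.inr hi)
  have hbm : ∀ n, MeasurableSet (badSet k I n) := by
    intro n
    rw [hbad n]
    exact (hm _).compl.union (hm _)
  have h2 : μ (⋃ n : ℕ, badSet k I n) ≤
      1 - (2 : ℝ≥0∞)⁻¹ ^ k + (2 : ℝ≥0∞)⁻¹ ^ k * ∑' n : ℕ, (2 : ℝ≥0∞)⁻¹ ^ (I n).card := by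
    have hU : (⋃ n : ℕ, badSet k I n) ⊆
        {x : ℕ → Bool | ∀ i ∈ Finset.range k, x i = false}ᶜ ∪
        ⋃ n, {x : ℕ → Bool | ∀ i ∈ Finset.range k ∪ I n, x i = false} := by
      refine Set.iUnion_subset fun n => ?_
      rw [hbad n]
      exact Set.union_subset_union_right _
        (Set.subset_iUnion (fun n => {x : ℕ → Bool | ∀ i ∈ Finset.range k ∪ I n, x i = false}) n)
    refine (MeasureTheory.measure_mono hU).trans ((MeasureTheory.measure_union_le _ _).trans ?_)
    rw [hPc]
    refine add_le_add le_rfl ((MeasureTheory.measure_iUnion_le _).trans ?_)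
    rw [← ENNReal.tsum_mul_left]
    refine ENNReal.tsum_le_tsum fun n => ?_
    rw [hc, hcard, pow_add]
  have hk1 : (2 : ℝ≥0∞)⁻¹ ^ k ≤ 1 := pow_le_one₀ (by simp) (by simp)
  have hk0 : (2 : ℝ≥0∞)⁻¹ ^ k ≠ 0 := by simp
  have hkt : (2 : ℝ≥0∞)⁻¹ ^ k ≠ ⊤ := ne_top_of_le_ne_top ENNReal.one_ne_top hk1
  have h3 : μ (⋃ n : ℕ, badSet k I n) < 1 := by
    refine lt_of_le_of_lt h2 ?_
    have hlt : (2 : ℝ≥0∞)⁻¹ ^ k * ∑' n : ℕ, (2 : ℝ≥0∞)⁻¹ ^ (I n).card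
        < (2 : ℝ≥0∞)⁻¹ ^ k := by
      have h := ENNReal.mul_lt_mul_right hk0 hkt hsum
      rwa [mul_one] at h
    calc _ < 1 - (2 : ℝ≥0∞)⁻¹ ^ k + (2 : ℝ≥0∞)⁻¹ ^ k :=
          ENNReal.add_lt_add_left (ne_top_of_le_ne_top ENNReal.one_ne_top tsub_le_self) hlt
      _ = 1 := tsub_add_cancel_of_le hk1
  refine ⟨fun n => ?_, h2, h3, (⋃ n, badSet k I n)ᶜ, (MeasurableSet.iUnion hbm).compl, ?_, ?_⟩
  · rw [hbad n, MeasureTheory.measure_union _ (hm _), hPc, hc, hcard]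
    rw [Set.disjoint_left]
    intro x hx hx2
    exact hx fun i hi => hx2 i (Finset.mem_union_left _ hi)
  · rw [MeasureTheory.prob_compl_eq_one_sub (MeasurableSet.iUnion hbm)]
    exact tsub_pos_of_lt h3
  · intro n
    exact (disjoint_compl_left).mono_right (Set.subset_iUnion (badSet k I) n)
end

section
/- Let μ be an infinite cardinal and let (Q_i)_{i∈I} be a family of preorders, each with a greatest element, with |I| ≤ 2^μ. Suppose each Q_i is μ-Fr-linked as witnessed by a covering Q_i = ⋃_{ζ<μ} Q_{i,ζ} by Fr-linked sets, and suppose that for every finite u ⊆ I and every s : u → μ the set ∏_{i∈u} Q_{i,s(i)} is Fr-linked in ∏_{i∈u} Q_i (ordered coordinatewise). Then the finite-support product of (Q_i)_{i∈I} is μ-Fr-linked. -/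
universe u

/-- `P` is `μ`-Fr-linked: `P` is the union of at most `μ` many Fr-linked subsets. -/
def MuFrLinked (μ : Cardinal.{u}) (P : Type u) [Preorder P] : Prop :=
  ∃ 𝒬 : Set (Set P), Cardinal.mk 𝒬 ≤ μ ∧ ⋃₀ 𝒬 = Set.univ ∧ ∀ Q ∈ 𝒬, FrLinked Q

open Classical in
theorem ek_sep {I M : Type u} [Nonempty M] (e : I → Set M) (he : Function.Injective e)
    (S : Finset I) : ∃ F : Finset M, ∀ i ∈ S, ∀ j ∈ S,
      F.filter (· ∈ e i) = F.filter (· ∈ e j) → i = j := by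
  have h : ∀ i j : I, ∃ m : M, i ≠ j → ¬ (m ∈ e i ↔ m ∈ e j) := by
    intro i j
    by_cases hij : i = j
    · exact ⟨Classical.arbitrary M, fun h => absurd hij h⟩
    · by_contra! hc
      exact hij (he (Set.ext fun m => (hc m).2))
  choose d hd using h
  refine ⟨Finset.image₂ d S S, fun i hi j hj hF => ?_⟩
  by_contra hij
  apply hd i j hij
  have hm : d i j ∈ Finset.image₂ d S S := Finset.mem_image₂_of_mem hi hj
  have := Finset.ext_iff.1 hF (d i j)
  simpa [Finset.mem_filter, hm] using this

/-- A maximal kernel for a sequence of finite sets of bounded size. -/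
theorem ek_kernel {I : Type u} (w : ℕ → Finset I) (k : ℕ) (hk : ∀ n, (w n).card = k) :
    ∃ v : Finset I, {n | v ⊆ w n}.Infinite ∧ ∀ i ∉ v, {n | v ⊆ w n ∧ i ∈ w n}.Finite := by
  classical
  let P : ℕ → Prop := fun m => ∃ v : Finset I, v.card = m ∧ {n | v ⊆ w n}.Infinite
  have hP0 : P 0 := ⟨∅, rfl, by simpa using Set.infinite_univ⟩
  have hb : ∀ m, P m → m ≤ k := by
    rintro m ⟨v, rfl, hv⟩
    obtain ⟨n, hn⟩ := hv.nonempty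
    exact (Finset.card_le_card hn).trans (hk n).le
  obtain ⟨v, hv, hinf⟩ : P (Nat.findGreatest P k) := Nat.findGreatest_spec (Nat.zero_le k) hP0
  refine ⟨v, hinf, fun i hi => ?_⟩
  by_contra hc
  have h1 : P (v.card + 1) := by
    refine ⟨insert i v, Finset.card_insert_of_notMem hi, ?_⟩
    have hc' : {n | v ⊆ w n ∧ i ∈ w n}.Infinite := hc
    refine hc'.mono ?_
    rintro n ⟨h1, h2⟩
    exact Finset.insert_subset h2 h1
  have := Nat.le_findGreatest (hb _ h1) h1
  omega

open Classical in
/-- The pieces of the finite support product. -/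
def ekPiece {I : Type u} (Q : I → Type u) [∀ i, Preorder (Q i)] [∀ i, OrderTop (Q i)]
    {Z M : Type u} (K : (i : I) → Z → Set (Q i)) (e : I → Set M)
    (t : ULift.{u} ℕ × Finset M × List (Finset M × Z)) :
    Set {f : ∀ i, Q i // {i : I | f i ≠ ⊤}.Finite} :=
  {f | f.2.toFinset.card = t.1.down ∧ ∀ i, f.1 i ≠ ⊤ →
    (∃ z, (t.2.1.filter (· ∈ e i), z) ∈ t.2.2) ∧
    ∀ z, (t.2.1.filter (· ∈ e i), z) ∈ t.2.2 → f.1 i ∈ K i z}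

theorem ekPiece_linked {I : Type u} (Q : I → Type u) [∀ i, Preorder (Q i)] [∀ i, OrderTop (Q i)]
    {Z M : Type u} (K : (i : I) → Z → Set (Q i)) (e : I → Set M)
    (hprod : ∀ (u : Finset I) (s : (i : u) → Z),
      FrLinked {f : ∀ i : u, Q i | ∀ i : u, f i ∈ K i (s i)})
    (t : ULift.{u} ℕ × Finset M × List (Finset M × Z)) : FrLinked (ekPiece Q K e t) := by
  classical
  intro p hp
  obtain ⟨v, hinf, hfin⟩ := ek_kernel (fun n => (p n).2.toFinset) t.1.down (fun n => (hp n).1)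
  let A : Set ℕ := {n | v ⊆ (p n).2.toFinset}
  have hA : A.Infinite := hinf
  have hvA : ∀ n ∈ A, ∀ i ∈ v, (p n).1 i ≠ ⊤ := fun n hn i hi => by
    simpa using hn hi
  obtain ⟨n0, hn0⟩ := hA.nonempty
  have hz : ∀ i : v, ∃ z, (t.2.1.filter (· ∈ e i), z) ∈ t.2.2 := fun i => by
    obtain ⟨z, hz⟩ := ((hp n0).2 i (hvA n0 hn0 i i.2)).1
    exact ⟨z, by convert hz⟩
  choose s hs using hz
  haveI : Infinite A := hA.to_subtype
  let a : ℕ ↪o ℕ := Nat.orderEmbeddingOfSet A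
  have ha : ∀ n, a n ∈ A := fun n => by
    have h : a n ∈ Set.range (Nat.orderEmbeddingOfSet A) := ⟨n, rfl⟩
    rwa [Nat.orderEmbeddingOfSet_range] at h
  obtain ⟨q, hq⟩ := hprod v s (fun n i => (p (a n)).1 i) (fun n i =>
    ((hp (a n)).2 i (hvA _ (ha n) i i.2)).2 (s i) (by convert hs i))
  refine ⟨⟨fun i => if h : i ∈ v then q ⟨i, h⟩ else ⊤, v.finite_toSet.subset ?_⟩, ?_⟩
  · intro i hi
    by_contra h
    have h' : i ∉ v := h
    simp [h'] at hi
  · intro r hr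
    have hB := hq (fun i => r.1 i) (fun i => by
      have := hr i
      simpa using this)
    have hbad : {n | v ⊆ (p n).2.toFinset ∧ ∃ i ∉ v, r.1 i ≠ ⊤ ∧ (p n).1 i ≠ ⊤}.Finite := by
      refine Set.Finite.subset ((r.2.subset (t := {i | i ∉ v ∧ r.1 i ≠ ⊤})
        (fun i h => h.2)).biUnion (fun i hi => hfin i hi.1)) ?_
      rintro n ⟨h1, i, h2, h3, h4⟩
      simp only [Set.mem_iUnion]
      exact ⟨i, ⟨h2, h3⟩, h1, by simpa using h4⟩
    have hC : (a '' {n | Compat (fun i : v => r.1 i) (fun i : v => (p (a n)).1 i)}).Infinite :=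
      hB.image a.injective.injOn
    refine (hC.diff hbad).mono ?_
    rintro _ ⟨⟨n, ⟨c, hc1, hc2⟩, rfl⟩, hn⟩
    have hn' : ∀ i ∉ v, r.1 i ≠ ⊤ → (p (a n)).1 i = ⊤ := by
      intro i h1 h2
      by_contra h3
      exact hn ⟨ha n, i, h1, h2, h3⟩
    refine ⟨⟨fun i => if h : i ∈ v then c ⟨i, h⟩ else if r.1 i = ⊤ then (p (a n)).1 i else r.1 i,
      ((v.finite_toSet.union r.2).union (p (a n)).2).subset ?_⟩, ?_, ?_⟩
    · intro i hi
      by_contra h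
      simp only [Set.mem_union, not_or, Set.mem_setOf_eq, not_not, Finset.mem_coe] at h
      obtain ⟨⟨h1, h2⟩, h3⟩ := h
      simp [h1, h2, h3] at hi
    · intro i
      by_cases h : i ∈ v
      · simpa [h] using hc1 ⟨i, h⟩
      · by_cases h2 : r.1 i = ⊤ <;> simp [h, h2]
    · intro i
      by_cases h : i ∈ v
      · simpa [h] using hc2 ⟨i, h⟩
      · by_cases h2 : r.1 i = ⊤
        · simp [h, h2]
        · simp [h, h2, hn' i h h2]

/-- Let `μ` be an infinite cardinal and `(Q_i)_{i ∈ I}` a family of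
preorders, each with a greatest element, with `|I| ≤ 2^μ`. Suppose each `Q_i` is
`μ`-Fr-linked as witnessed by a covering `Q_i = ⋃_{ζ < μ} Q_{i,ζ}` by Fr-linked sets,
and suppose that for every finite `u ⊆ I` and every `s : u → μ` the set
`∏_{i ∈ u} Q_{i,s(i)}` is Fr-linked in `∏_{i ∈ u} Q_i` (ordered coordinatewise).
Then the finite-support product of `(Q_i)_{i ∈ I}` is `μ`-Fr-linked. -/
theorem stmt_16 {I : Type u} (Q : I → Type u) [∀ i, Preorder (Q i)] [∀ i, OrderTop (Q i)]
    (μ : Cardinal.{u}) (hμ : Cardinal.aleph0 ≤ μ)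
    (hI : Cardinal.mk I ≤ 2 ^ μ)
    (Z : Type u) (hZ : Cardinal.mk Z ≤ μ)
    (K : (i : I) → Z → Set (Q i))
    (hcov : ∀ (i : I) (x : Q i), ∃ z : Z, x ∈ K i z)
    (hlink : ∀ (i : I) (z : Z), FrLinked (K i z))
    (hprod : ∀ (u : Finset I) (s : (i : u) → Z),
      FrLinked {f : ∀ i : u, Q i | ∀ i : u, f i ∈ K i (s i)}) :
    MuFrLinked μ {f : ∀ i, Q i // {i : I | f i ≠ ⊤}.Finite} := by
  classical
  induction μ using Cardinal.inductionOn with | _ M => ?_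
  haveI : Infinite M := Cardinal.infinite_iff.2 hμ
  rw [← Cardinal.mk_set] at hI
  obtain ⟨e⟩ := Cardinal.le_def _ _ |>.1 hI
  refine ⟨Set.range (ekPiece Q K e), ?_, ?_, ?_⟩
  · refine Cardinal.mk_range_le.trans ?_
    have h1 : Cardinal.mk (Finset M × Z) ≤ Cardinal.mk M := by
      rw [Cardinal.mk_prod, Cardinal.lift_id, Cardinal.lift_id, Cardinal.mk_finset_of_infinite]
      exact Cardinal.mul_le_of_le hμ le_rfl hZ
    have h2 : Cardinal.mk (List (Finset M × Z)) ≤ Cardinal.mk M :=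
      (Cardinal.mk_list_le_max _).trans (max_le hμ h1)
    have h3 : Cardinal.mk (Finset M × List (Finset M × Z)) ≤ Cardinal.mk M := by
      rw [Cardinal.mk_prod, Cardinal.lift_id, Cardinal.lift_id, Cardinal.mk_finset_of_infinite]
      exact Cardinal.mul_le_of_le hμ le_rfl h2
    rw [Cardinal.mk_prod, Cardinal.lift_id, Cardinal.lift_id]
    exact Cardinal.mul_le_of_le hμ (by simpa using hμ) h3
  · refine Set.eq_univ_of_forall fun f => ?_
    obtain ⟨F, hF⟩ := ek_sep e e.injective f.2.toFinset
    choose z hz using fun i => hcov i (f.1 i)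
    refine ⟨_, ⟨(⟨f.2.toFinset.card⟩, F,
      f.2.toFinset.toList.map fun i => (F.filter (· ∈ e i), z i)), rfl⟩, rfl, fun i hi => ⟨⟨z i, ?_⟩, ?_⟩⟩
    · refine List.mem_map.2 ⟨i, by simpa using hi, ?_⟩
      congr!
    · intro y hy
      obtain ⟨j, hj, hj2⟩ := List.mem_map.1 hy
      simp only [Prod.mk.injEq] at hj2
      have hij : j = i := hF j (by simpa using hj) i (by simpa using hi) (by convert hj2.1)
      subst hij
      rw [← hj2.2]
      exact hz j
  · rintro _ ⟨t, rfl⟩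
    exact ekPiece_linked Q K e hprod t
end

section
/- Let κ be an infinite cardinal, let A be a κ-strong-Md family, and let A'' ⊆ A with |A''| ≥ κ. Then the set of k ∈ ℕ for which there exists F ∈ [A]^{<ω} such that for every l ≥ k there is a ∈ A'' with [k,l) ∖ ⋃F ⊆ a, is infinite. -/
/-- The relation `x ⊏* h` of the relational system `Md(A)`: for all but finitely many
`n ∈ ℕ` and every finite `F ⊆ A`, the set `[n, h(n,F)) ∖ ⋃F` is not a subset of `x`. -/
def MdRel (A : Set (Set ℕ)) (x : Set ℕ) (h : ℕ → Finset (Set ℕ) → ℕ) : Prop :=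
  ∃ n₀ : ℕ, ∀ n ≥ n₀, ∀ F : Finset (Set ℕ), ↑F ⊆ A →
    ¬ (Set.Ico n (h n F) \ ⋃₀ (F : Set (Set ℕ)) ⊆ x)

/-- Let `κ` be an infinite cardinal, `A` a `κ`-strong-`Md` family
(an infinite family of infinite subsets of `ℕ` with `|A| ≥ κ` such that for every
`h : ℕ × [A]^{<ω} → ℕ`, `|{a ∈ A : a ⊏* h}| < κ`), and `A'' ⊆ A` with `|A''| ≥ κ`.
Then the set of `k ∈ ℕ` for which there exists `F ∈ [A]^{<ω}` such that for every
`l ≥ k` there is `a ∈ A''` with `[k,l) ∖ ⋃F ⊆ a`, is infinite. -/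
theorem stmt_17 (κ : Cardinal.{0}) (hκ : Cardinal.aleph0 ≤ κ)
    (A : Set (Set ℕ)) (hAinf : ∀ a ∈ A, a.Infinite)
    (hAcard : κ ≤ Cardinal.mk A)
    (hMd : ∀ h : ℕ → Finset (Set ℕ) → ℕ,
      Cardinal.mk {a : Set ℕ // a ∈ A ∧ MdRel A a h} < κ)
    (A'' : Set (Set ℕ)) (hsub : A'' ⊆ A) (hA''card : κ ≤ Cardinal.mk A'') :
    {k : ℕ | ∃ F : Finset (Set ℕ), ↑F ⊆ A ∧
      ∀ l ≥ k, ∃ a ∈ A'', Set.Ico k l \ ⋃₀ (F : Set (Set ℕ)) ⊆ a}.Infinite := by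
  intro hfin
  obtain ⟨N, hN⟩ := hfin.bddAbove
  have key : ∀ k : ℕ, ∀ F : Finset (Set ℕ), ∃ l : ℕ, N + 1 ≤ k → ↑F ⊆ A →
      ∀ a ∈ A'', ¬ (Set.Ico k l \ ⋃₀ (F : Set (Set ℕ)) ⊆ a) := by
    intro k F
    by_contra hcon
    push Not at hcon
    obtain ⟨hk, hF, -⟩ := hcon 0
    have hmem := hN (show k ∈ _ from ⟨F, hF, fun l _ => (hcon l).2.2⟩)
    omega
  choose h hh using key
  refine absurd (hMd h) (not_lt.mpr (hA''card.trans ?_))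
  exact Cardinal.mk_le_mk_of_subset (s := A'') (t := {a | a ∈ A ∧ MdRel A a h})
    (fun a ha => ⟨hsub ha, N + 1, fun n hn F hF => hh n F hn hF a ha⟩)
end
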